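/- arXiv:1408.4200 — 12 statements merged into one kernel-verified Lean document; each statement's English description precedes it below -/
import Mathlib

section
/- Let a : ℕ → ℕ and let g : (ℕ → ℕ) → ℕ be a function such that for every x : ℕ → ℕ with x ≠ a, g(x) ≥ 1 + (the least i with x(i) ≠ a(i)). Then there exists l ∈ ℕ such that for every l' ≥ l and every n ∈ ℕ: n = a(l') if and only if there exists x : ℕ → ℕ with x(i) = a(i) for all i < l', x(l') = n, and g(x) ≤ l'. (Hence a is recoverable, up to a finite initial segment, from g.) -/
/-- If `g : 𝒩 → ℕ` everywhere dominates the exit function of the tree of initial segments of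
`a : ℕ → ℕ` (i.e. `g x ≥ 1 + (the least i with x i ≠ a i)` for every `x ≠ a`), then there is an
`l` such that for all `l' ≥ l` and all `n`, `n = a l'` iff some `x` agreeing with `a` below `l'`
and with `x l' = n` has `g x ≤ l'`. -/
theorem stmt1 (a : ℕ → ℕ) (g : (ℕ → ℕ) → ℕ)
    (hg : ∀ x : ℕ → ℕ, (hx : x ≠ a) → 1 + Nat.find (Function.ne_iff.mp hx) ≤ g x) :
    ∃ l : ℕ, ∀ l' ≥ l, ∀ n : ℕ,
      (n = a l' ↔ ∃ x : ℕ → ℕ, (∀ i < l', x i = a i) ∧ x l' = n ∧ g x ≤ l') := by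
  -- From `l = g a` on, `a` itself is a witness; any other `x` agreeing with `a` below `l'` first
  -- differs from `a` at or after `l'`, so `g x > l'`, and hence `a` is the only possible witness.
  refine ⟨g a, fun l' hl n => ⟨fun hn => ⟨a, fun _ _ => rfl, hn.symm, hl⟩, ?_⟩⟩
  rintro ⟨x, hagree, hxn, hgx⟩
  by_cases hx : x = a
  · rw [← hxn, hx]
  · have hle : l' ≤ Nat.find (Function.ne_iff.mp hx) :=
      (Nat.le_find_iff _ _).mpr fun i hi hne => hne (hagree i hi)
    have hdom := hg x hx
    omega
end

section
/- Let X be a set, A ⊆ X, and let g : (ℕ → X) → ℕ satisfy f_A(x) ≤ g(x) for all x : ℕ → X. Then there exists a finite sequence t ∈ List X such that A = { z ∈ X : for every x : ℕ → X extending the sequence t followed by z, g(x) ≥ |t| + 1 }. -/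
/-!
If `t` avoids `A` and `z ∈ A`, every `x` extending `t ⌢ z` has `f_A x = |t| + 1`, so `A` is contained
in the set determined by `t`. Were no `t` to give equality, each `t` avoiding `A` could therefore be
prolonged by some `z ∉ A` such that `g x ≥ |t| + 1` for all `x` extending `t ⌢ z`. Iterating from the
empty sequence produces an infinite `x` with `g x ≥ n + 1` for every `n`, which is absurd.
-/

open Classical in
/-- The encoding function `f_A : (ℕ → X) → ℕ` of a set `A ⊆ X`: `f_A x = l + 1` where `l` is
least with `x l ∈ A`, and `f_A x = 0` if no entry of `x` lies in `A`. -/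
noncomputable def encFun {X : Type*} (A : Set X) (x : ℕ → X) : ℕ :=
  if h : ∃ l, x l ∈ A then Nat.find h + 1 else 0

/-- `x : ℕ → X` extends the finite sequence `t : List X`. -/
def extendsList {X : Type*} (t : List X) (x : ℕ → X) : Prop :=
  ∀ (i : ℕ) (h : i < t.length), x i = t.get ⟨i, h⟩

/-- If `t` avoids `A` and `z ∈ A`, then the first entry in `A` of any extension of `t ⌢ z` is `z`. -/
lemma encFun_of_extends {X : Type*} {A : Set X} {t : List X} (ht : ∀ a ∈ t, a ∉ A) {z : X}
    (hz : z ∈ A) {x : ℕ → X} (hx : extendsList (t ++ [z]) x) : encFun A x = t.length + 1 := by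
  classical
  have hlast : x t.length = z := by
    have := hx t.length (by simp)
    simpa using this
  have h : ∃ l, x l ∈ A := ⟨t.length, by rwa [hlast]⟩
  unfold encFun
  rw [dif_pos h, Nat.add_right_cancel_iff, Nat.find_eq_iff]
  refine ⟨by rwa [hlast], fun n hn => ?_⟩
  have hn' := hx n (by simp; omega)
  rw [hn']
  apply ht
  simp [List.getElem_append_left hn]

/-- If `g` everywhere dominates the encoding function `f_A` of `A ⊆ X`, then there is a finite
sequence `t` such that `A = { z | g x ≥ |t| + 1 for every x extending t ⌢ z }`. -/
theorem stmt2 {X : Type*} (A : Set X) (g : (ℕ → X) → ℕ)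
    (hg : ∀ x : ℕ → X, encFun A x ≤ g x) :
    ∃ t : List X,
      A = { z : X | ∀ x : ℕ → X, extendsList (t ++ [z]) x → t.length + 1 ≤ g x } := by
  by_contra hcon
  have step : ∀ t : List X, (∀ a ∈ t, a ∉ A) →
      ∃ z, z ∉ A ∧ ∀ x : ℕ → X, extendsList (t ++ [z]) x → t.length + 1 ≤ g x := by
    intro t ht
    by_contra hno
    refine hcon ⟨t, Set.Subset.antisymm (fun z hz x hx => ?_) (fun z hz => ?_)⟩
    · exact encFun_of_extends ht hz hx ▸ hg x
    · by_contra hzA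
      exact hno ⟨z, hzA, hz⟩
  have : Nonempty X := ⟨(step [] (by simp)).choose⟩
  choose! next hnext using step
  let L : ℕ → List X := fun n => Nat.rec [] (fun _ t => t ++ [next t]) n
  have hL : ∀ n, L n = (List.range n).map (fun k => next (L k)) := by
    intro n
    induction n with
    | zero => rfl
    | succ n ih =>
      rw [List.range_succ, List.map_append, ← ih]
      rfl
  have hA : ∀ n, ∀ a ∈ L n, a ∉ A := by
    intro n
    induction n with
    | zero => simp [L]
    | succ n ih =>
      intro a ha
      rcases List.mem_append.1 (show a ∈ L n ++ [next (L n)] from ha) with h | h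
      · exact ih a h
      · rw [List.mem_singleton.1 h]
        exact (hnext _ ih).1
  let x : ℕ → X := fun k => next (L k)
  have hx : ∀ n, extendsList (L n) x := by
    intro n
    rw [hL n]
    intro i hi
    simp [x]
  have hlen : (L (g x)).length = g x := by
    rw [hL]
    simp
  have := (hnext _ (hA (g x))).2 x (hx (g x + 1))
  omega
end

section
/- Let X be a set. For every function g : (ℕ → X) → ℕ, the collection { A ⊆ X : f_A(x) ≤ g(x) for all x : ℕ → X } of subsets of X whose encoding function is everywhere dominated by g has cardinality at most max(ℵ₀, #X). -/
/-!
Write `κ = max ℵ₀ #X` and suppose that the family `F` of dominated sets has more than `κ` members.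
A family `G` of more than `κ` subsets of `X` has a point `y`, lying in some member of `G`, that is
omitted by more than `κ` members of `G` (`exists_split`): otherwise all but `κ` members of `G`
contain every point of `⋃₀ G`, and so are equal to `⋃₀ G`. Starting from `F` and repeatedly passing
to the members that omit the chosen point gives a sequence `x` such that for every `n` some `A ∈ F`
contains `x n` but none of `x 0, …, x (n - 1)`, so that `f_A x = n + 1`. For `n = g x` this
contradicts `f_A ≤ g`.
-/

universe u

theorem exists_split {X : Type u} (G : Set (Set X))
    (hG : max Cardinal.aleph0 (Cardinal.mk X) < Cardinal.mk G) :
    ∃ y, (∃ A ∈ G, y ∈ A) ∧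
      max Cardinal.aleph0 (Cardinal.mk X) < Cardinal.mk ({A ∈ G | y ∉ A} : Set (Set X)) := by
  by_contra! hcon
  refine hG.not_ge ?_
  set κ := max Cardinal.aleph0 (Cardinal.mk X) with hκ
  have hω : Cardinal.aleph0 ≤ κ := le_max_left _ _
  have hX : Cardinal.mk X ≤ κ := le_max_right _ _
  have hcover : G ⊆ {⋃₀ G} ∪ ⋃ y : ⋃₀ G, {A ∈ G | y.1 ∉ A} := by
    intro A hA
    by_cases h : ⋃₀ G ⊆ A
    · exact Or.inl ((Set.subset_sUnion_of_mem hA).antisymm h)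
    · obtain ⟨y, hy, hyA⟩ := Set.not_subset.1 h
      exact Or.inr (Set.mem_iUnion.2 ⟨⟨y, hy⟩, hA, hyA⟩)
  have hunion : Cardinal.mk (⋃ y : ⋃₀ G, {A ∈ G | y.1 ∉ A} : Set (Set X)) ≤ κ := by
    refine (Cardinal.mk_iUnion_le _).trans ?_
    refine (mul_le_mul' ((Cardinal.mk_set_le _).trans hX)
      (ciSup_le' fun y => ?_)).trans (Cardinal.mul_eq_self hω).le
    obtain ⟨A, hA, hyA⟩ := y.2
    exact hcon y.1 ⟨A, hA, hyA⟩
  calc Cardinal.mk G ≤ _ := Cardinal.mk_le_mk_of_subset hcover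
    _ ≤ _ := Cardinal.mk_union_le _ _
    _ ≤ κ + κ := add_le_add
        (by rw [Cardinal.mk_singleton]; exact Cardinal.one_le_aleph0.trans hω) hunion
    _ = κ := Cardinal.add_eq_self hω

theorem lt_encFun {X : Type u} {A : Set X} {x : ℕ → X} {n : ℕ} (hn : x n ∈ A)
    (hlt : ∀ i < n, x i ∉ A) : n < encFun A x := by
  classical
  have h : ∃ l, x l ∈ A := ⟨n, hn⟩
  rw [encFun, dif_pos h, Nat.lt_succ_iff, Nat.le_find_iff]
  exact hlt

/-- For any `g : (ℕ → X) → ℕ`, the collection of subsets `A ⊆ X` whose encoding function is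
everywhere dominated by `g` has cardinality at most `max ℵ₀ #X`. -/
theorem stmt3 {X : Type u} (g : (ℕ → X) → ℕ) :
    Cardinal.mk {A : Set X // ∀ x : ℕ → X, encFun A x ≤ g x} ≤
      max Cardinal.aleph0 (Cardinal.mk X) := by
  by_contra! hlt
  -- `choose!` below needs a default point of `X`.
  have : Nonempty X := let ⟨y, _⟩ := exists_split _ hlt; ⟨y⟩
  choose! y hmem hbig using exists_split (X := X)
  let F : Set (Set X) := {A | ∀ x : ℕ → X, encFun A x ≤ g x}
  let G : ℕ → Set (Set X) := fun n => Nat.rec F (fun _ H => {A ∈ H | y H ∉ A}) n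
  have hG : ∀ n, max Cardinal.aleph0 (Cardinal.mk X) < Cardinal.mk ↥(G n) := by
    intro n
    induction n with
    | zero => exact hlt
    | succ n ih => exact hbig _ ih
  have hprop : ∀ n, ∀ A ∈ G n, A ∈ F ∧ ∀ i < n, y (G i) ∉ A := by
    intro n
    induction n with
    | zero => exact fun A hA => ⟨hA, by simp⟩
    | succ n ih =>
      rintro A ⟨hA, hyA⟩
      refine ⟨(ih A hA).1, fun i hi => ?_⟩
      rcases Nat.lt_succ_iff_lt_or_eq.1 hi with h | rfl
      · exact (ih A hA).2 i h
      · exact hyA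
  let x : ℕ → X := fun n => y (G n)
  obtain ⟨A, hA, hxA⟩ := hmem _ (hG (g x))
  obtain ⟨hF, havoid⟩ := hprop _ A hA
  exact (lt_encFun (x := x) hxA havoid).not_ge (hF x)
end

section
/- The least cardinality of a family G of functions from 𝒩 to ℕ such that for every function f : 𝒩 → ℕ there is g ∈ G with f(x) ≤ g(x) for all x ∈ 𝒩, equals 2^𝔠, where 𝔠 = 2^{ℵ₀} is the cardinality of the continuum. (In the paper's notation, ||ℰ_{𝒫(𝒩)}|| = 2^{2^ω}.) -/
/-!
The family of all functions `𝒩 → ℕ` is dominating and has `2 ^ 𝔠` members, which gives `≤`.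

For `≥`, one uses an independent family in the style of Engelking and Karłowicz. Let `X` be the set
of pairs `(d, s)` of a sequence `d` in `𝒩` and a sequence `s` of subsets of `ℕ`; it has
cardinality `𝔠`. Each `A ⊆ 𝒩` gives the function `codeIndex A : X → ℕ` sending `(d, s)` to the
least `n` with `d ⁻¹' A = s n`. Given pairwise distinct sets `A 0, A 1, …`, let `d` enumerate
countably many points separating them and let `s n = d ⁻¹' A n`; then `codeIndex (A n) (d, s) = n`
for every `n` (`exists_codeIndex_eq`). Hence no function `X → ℕ` dominates `codeIndex A` for
infinitely many `A`. If a dominating family had fewer than `2 ^ 𝔠` members, one of them would, by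
the pigeonhole principle, dominate `codeIndex A` for infinitely many `A`.
-/

/-- The least `n` such that the trace `d ⁻¹' A` of `A` along the sequence `d` is the `n`-th set of
the list `s`, and `0` when the trace is not listed. -/
noncomputable def codeIndex {T : Type} (A : Set T) (x : (ℕ → T) × (ℕ → Set ℕ)) : ℕ :=
  sInf {n | x.1 ⁻¹' A = x.2 n}

theorem exists_codeIndex_eq {T : Type} [Nonempty T] (A : ℕ → Set T)
    (hA : Function.Injective A) :
    ∃ x : (ℕ → T) × (ℕ → Set ℕ), ∀ n, codeIndex (A n) x = n := by
  have hsep : ∀ p : ℕ × ℕ, ∃ t : T, p.1 ≠ p.2 → ¬ (t ∈ A p.1 ↔ t ∈ A p.2) := by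
    intro p
    by_cases hp : p.1 = p.2
    · exact ⟨Classical.arbitrary T, fun h => absurd hp h⟩
    · by_contra! hcon
      exact hp (hA (Set.ext fun t => (hcon t).2))
  choose t ht using hsep
  refine ⟨(fun k => t (Nat.unpair k), fun n => (fun k => t (Nat.unpair k)) ⁻¹' A n), fun n => ?_⟩
  have hset : {m | (fun k => t (Nat.unpair k)) ⁻¹' A n = (fun k => t (Nat.unpair k)) ⁻¹' A m}
      = {n} := by
    ext m
    simp only [Set.mem_ofPred_eq, Set.mem_singleton_iff]
    constructor
    · intro h
      by_contra hne
      refine ht (n, m) (Ne.symm hne) ?_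
      have := Set.ext_iff.mp h (Nat.pair n m)
      simpa using this
    · rintro rfl
      rfl
  simp only [codeIndex, hset, csInf_singleton]

theorem mk_baire : Cardinal.mk (ℕ → ℕ) = Cardinal.continuum := by
  simp

theorem mk_codes : Cardinal.mk ((ℕ → (ℕ → ℕ)) × (ℕ → Set ℕ)) = Cardinal.continuum := by
  simp

/-- The norm of the everywhere-domination relation `ℰ_{𝒫(𝒩)}` on all functions `𝒩 → ℕ`:
the least cardinality of a family `G` of functions `𝒩 → ℕ` such that every function `𝒩 → ℕ`
is everywhere dominated by a member of `G` equals `2 ^ 𝔠 = 2 ^ (2 ^ ℵ₀)`. -/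
theorem stmt4 :
    sInf {κ : Cardinal |
        ∃ G : Set ((ℕ → ℕ) → ℕ), Cardinal.mk ↥G = κ ∧
          ∀ f : (ℕ → ℕ) → ℕ, ∃ g ∈ G, ∀ x : ℕ → ℕ, f x ≤ g x} =
      (2 : Cardinal) ^ ((2 : Cardinal) ^ Cardinal.aleph0) := by
  have huniv : Cardinal.mk (Set.univ : Set ((ℕ → ℕ) → ℕ)) =
      (2 : Cardinal) ^ ((2 : Cardinal) ^ Cardinal.aleph0) := by
    rw [Cardinal.mk_univ, ← Cardinal.power_def, mk_baire, Cardinal.mk_nat,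
      Cardinal.two_power_aleph0]
    exact Cardinal.power_eq_two_power Cardinal.aleph0_le_continuum
      (Cardinal.natCast_le_aleph0 (n := 2)) Cardinal.aleph0_le_continuum
  have hmem : (2 : Cardinal) ^ ((2 : Cardinal) ^ Cardinal.aleph0) ∈ {κ : Cardinal |
        ∃ G : Set ((ℕ → ℕ) → ℕ), Cardinal.mk ↥G = κ ∧
          ∀ f : (ℕ → ℕ) → ℕ, ∃ g ∈ G, ∀ x : ℕ → ℕ, f x ≤ g x} :=
    ⟨Set.univ, huniv, fun f => ⟨f, Set.mem_univ f, fun _ => le_rfl⟩⟩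
  refine le_antisymm (csInf_le' hmem) (le_csInf ⟨_, hmem⟩ ?_)
  rintro κ ⟨G, rfl, hG⟩
  by_contra! hlt
  obtain ⟨e⟩ : Nonempty ((ℕ → ℕ) ≃ (ℕ → (ℕ → ℕ)) × (ℕ → Set ℕ)) :=
    Cardinal.eq.mp (mk_baire.trans mk_codes.symm)
  choose F hFG hF using fun A : Set (ℕ → ℕ) => hG fun x => codeIndex A (e x)
  have hcard : Cardinal.mk G < Cardinal.mk (Set (ℕ → ℕ)) := by
    rwa [Cardinal.mk_set, mk_baire, ← Cardinal.two_power_aleph0]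
  obtain ⟨g, hg⟩ := Cardinal.exists_infinite_fiber
    (fun A : Set (ℕ → ℕ) => (⟨F A, hFG A⟩ : G)) hcard
  let A := Infinite.natEmbedding
    ((fun A : Set (ℕ → ℕ) => (⟨F A, hFG A⟩ : G)) ⁻¹' {g})
  obtain ⟨x, hx⟩ := exists_codeIndex_eq (fun n => (A n : Set (ℕ → ℕ)))
    (Subtype.val_injective.comp A.injective)
  -- At the point coded by `x`, the value of `g` would be an upper bound of all natural numbers.
  have hle : ∀ n, n ≤ g.1 (e.symm x) := by
    intro n
    have h1 := hF (A n) (e.symm x)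
    have h2 : F (A n) = g.1 := congrArg Subtype.val (A n).2
    rw [h2, Equiv.apply_symm_apply, hx n] at h1
    exact h1
  exact absurd (hle (g.1 (e.symm x) + 1)) (by omega)
end

section
/- There exist maps φ₋ and φ₊, where φ₋ assigns to each Borel function f : 𝒩 → 𝒩 a Borel function φ₋(f) : 𝒩 → ℕ and φ₊ assigns to each Borel function g : 𝒩 → ℕ a Borel function φ₊(g) : 𝒩 → 𝒩, such that for all Borel f : 𝒩 → 𝒩 and Borel g : 𝒩 → ℕ: if φ₋(f)(x) ≤ g(x) for every x ∈ 𝒩, then for every x ∈ 𝒩 the set { n ∈ ℕ : f(x)(n) > φ₊(g)(x)(n) } is finite. (That is, there is a morphism from the everywhere-domination relation ℰ on Borel functions 𝒩 → ℕ to the pointwise eventual-domination relation ℛ on Borel functions 𝒩 → 𝒩.) -/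
/-!
There are at most continuum many Borel functions `𝒩 → 𝒩`, so each such `f` has a code
`c f : 𝒩`, with `c` injective. A point `x : 𝒩` is read as a sequence `x₀, x₁, …` of points of `𝒩`,
and `φ₋ f x` is the least `n` with `xₙ = c f` (and `0` if there is none).

For any `g : 𝒩 → ℕ`, only finitely many `f` satisfy `φ₋ f ≤ g`: given infinitely many, let `x` list
the codes of distinct ones `f₀, f₁, …`; then `n = φ₋ (fₙ) x ≤ g x` for all `n`, which is absurd.
Hence `φ₊ g` can be the pointwise sum of those finitely many `f`.
-/

open Cardinal in
/-- Borel functions `𝒩 → 𝒩` can be coded injectively by points of `𝒩`: such a function is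
determined by the preimages of the sets `{y | y n = m}`, that is, by countably many of the
continuum many Borel sets. -/
lemma exists_code :
    ∃ c : {f : (ℕ → ℕ) → (ℕ → ℕ) // Measurable f} → (ℕ → ℕ), Function.Injective c := by
  have h1 : #{s : Set (ℕ → ℕ) // MeasurableSet s} ≤ 𝔠 := by
    have h := MeasurableSpace.cardinal_measurableSet_le_continuum
      ((MeasurableSpace.countable_countableGeneratingSet (α := ℕ → ℕ)).le_aleph0.trans
        aleph0_le_continuum)
    rw [MeasurableSpace.generateFrom_countableGeneratingSet] at h
    exact h
  let e : {f : (ℕ → ℕ) → (ℕ → ℕ) // Measurable f} →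
      (ℕ × ℕ → {s : Set (ℕ → ℕ) // MeasurableSet s}) := fun f p =>
    ⟨{x | f.1 x p.1 = p.2},
      ((measurable_pi_apply p.1).comp f.2) (measurableSet_singleton p.2)⟩
  have he : Function.Injective e := by
    intro f g h
    apply Subtype.ext
    funext x n
    have h2 := congrArg Subtype.val (congrFun h (n, f.1 x n))
    have h3 : x ∈ {y | g.1 y n = f.1 x n} := by
      rw [← show _ = {y | g.1 y n = f.1 x n} from h2]
      rfl
    exact h3.symm
  have h4 : #{f : (ℕ → ℕ) → (ℕ → ℕ) // Measurable f} ≤ #(ℕ → ℕ) := by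
    refine (mk_le_of_injective he).trans ?_
    rw [← power_def, ← power_def]
    refine (power_le_power_right h1).trans ?_
    simp
  obtain ⟨c⟩ := h4
  exact ⟨c, c.injective⟩

/-- The `n`-th point of the sequence of points of `𝒩` coded by `x`. -/
def row (x : ℕ → ℕ) (n : ℕ) : ℕ → ℕ := fun k => x (Nat.pair n k)

lemma measurable_row (n : ℕ) : Measurable fun x => row x n :=
  measurable_pi_lambda _ fun _ => measurable_pi_apply _

lemma exists_row_eq (s : ℕ → ℕ → ℕ) : ∃ x, ∀ n, row x n = s n :=
  ⟨fun k => s k.unpair.1 k.unpair.2, fun n => by funext k; simp [row]⟩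

lemma exists_index (a x : ℕ → ℕ) : ∃ n, row x n = a ∨ ∀ m, row x m ≠ a := by
  by_cases h : ∃ n, row x n = a
  · exact h.imp fun _ => Or.inl
  · exact ⟨0, Or.inr (not_exists.mp h)⟩

open Classical in
/-- The least index at which `a` occurs in the sequence coded by `x`, and `0` if `a` does not
occur. -/
noncomputable def index (a x : ℕ → ℕ) : ℕ := Nat.find (exists_index a x)

lemma measurable_index (a : ℕ → ℕ) : Measurable (index a) := by
  classical
  have h (n : ℕ) : MeasurableSet {x | row x n = a} :=
    measurable_row n (measurableSet_singleton a)
  have h' : MeasurableSet {x | ∀ m, row x m ≠ a} := by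
    rw [Set.ofPred_forall]
    exact MeasurableSet.iInter fun m => (h m).compl
  exact measurable_find (exists_index a) fun k => (h k).union h'

lemma row_index {a x : ℕ → ℕ} {n : ℕ} (h : row x n = a) : row x (index a x) = a := by
  classical
  exact (Nat.find_spec (exists_index a x)).resolve_right fun h' => h' n h

/-- A single `g : 𝒩 → ℕ` dominates `index a` for only finitely many `a`. -/
lemma finite_index_le (g : (ℕ → ℕ) → ℕ) : {a | ∀ x, index a x ≤ g x}.Finite := by
  by_contra hS
  have s := Set.Infinite.natEmbedding _ hS
  obtain ⟨x, hx⟩ := exists_row_eq fun n => (s n).1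
  have h (n : ℕ) : n ≤ g x := by
    have h1 : row x (index (s n).1 x) = (s n).1 := row_index (hx n)
    rw [hx] at h1
    have h2 := (s n).2 x
    rwa [s.injective (Subtype.ext h1)] at h2
  exact (Nat.lt_irrefl _) (h (g x + 1))

/-- There is a morphism from the everywhere-domination relation `ℰ` on Borel functions `𝒩 → ℕ`
to the pointwise eventual-domination relation `ℛ` on Borel functions `𝒩 → 𝒩`: there are maps
`φ₋` (from Borel functions `𝒩 → 𝒩` to Borel functions `𝒩 → ℕ`) and `φ₊` (from Borel functions
`𝒩 → ℕ` to Borel functions `𝒩 → 𝒩`) such that whenever `g` everywhere dominates `φ₋ f`, the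
function `φ₊ g` pointwise eventually dominates `f`. -/
theorem stmt5 :
    ∃ (φm : ((ℕ → ℕ) → (ℕ → ℕ)) → ((ℕ → ℕ) → ℕ))
      (φp : ((ℕ → ℕ) → ℕ) → ((ℕ → ℕ) → (ℕ → ℕ))),
      (∀ f : (ℕ → ℕ) → (ℕ → ℕ), Measurable f → Measurable (φm f)) ∧
      (∀ g : (ℕ → ℕ) → ℕ, Measurable g → Measurable (φp g)) ∧
      (∀ (f : (ℕ → ℕ) → (ℕ → ℕ)) (g : (ℕ → ℕ) → ℕ), Measurable f → Measurable g →
        (∀ x : ℕ → ℕ, φm f x ≤ g x) →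
        ∀ x : ℕ → ℕ, { n : ℕ | φp g x n < f x n }.Finite) := by
  classical
  obtain ⟨c, hc⟩ := exists_code
  have hfin (g : (ℕ → ℕ) → ℕ) : {f | ∀ x, index (c f) x ≤ g x}.Finite :=
    (finite_index_le g).preimage hc.injOn
  refine ⟨fun f => if hf : Measurable f then index (c ⟨f, hf⟩) else 0,
    fun g x n => ∑ f ∈ (hfin g).toFinset, f.1 x n, ?_, ?_, ?_⟩
  · intro f hf
    simpa only [dif_pos hf] using measurable_index _
  · intro g _
    exact measurable_pi_lambda _ fun n =>
      Finset.measurable_fun_sum _ fun f _ => (measurable_pi_apply n).comp f.2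
  · intro f g hf _ hle x
    simp only [dif_pos hf] at hle
    -- The domination even holds at every `n`, so the exceptional set is empty.
    convert Set.finite_empty
    refine Set.eq_empty_of_forall_notMem fun n hn => ?_
    have hmem : (⟨f, hf⟩ : {f : (ℕ → ℕ) → (ℕ → ℕ) // Measurable f}) ∈ (hfin g).toFinset :=
      (hfin g).mem_toFinset.mpr hle
    exact (Finset.single_le_sum (f := fun f => f.1 x n) (fun _ _ => Nat.zero_le _) hmem).not_gt hn
end

section
/- There exist maps φ₋ and φ₊ from Borel functions 𝒩 → 𝒩 to Borel functions 𝒩 → 𝒩 such that for all Borel f, g : 𝒩 → 𝒩: if for every x ∈ 𝒩 the set { n ∈ ℕ : φ₋(f)(x)(n) > g(x)(n) } is finite, then f(x) ≠ φ₊(g)(x) for every x ∈ 𝒩. (That is, there is a morphism from the pointwise eventual-domination relation ℛ on Borel functions to the disjointness relation 𝒟 on Borel functions.) -/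
/-- There is a morphism from the pointwise eventual-domination relation `ℛ` on Borel functions
`𝒩 → 𝒩` to the disjointness relation `𝒟` on Borel functions `𝒩 → 𝒩`: there are maps `φ₋, φ₊`
on Borel functions `𝒩 → 𝒩` such that whenever `g` pointwise eventually dominates `φ₋ f`, the
functions `f` and `φ₊ g` are disjoint. -/
theorem stmt6 :
    ∃ φm φp : ((ℕ → ℕ) → (ℕ → ℕ)) → ((ℕ → ℕ) → (ℕ → ℕ)),
      (∀ f : (ℕ → ℕ) → (ℕ → ℕ), Measurable f → Measurable (φm f)) ∧
      (∀ g : (ℕ → ℕ) → (ℕ → ℕ), Measurable g → Measurable (φp g)) ∧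
      (∀ f g : (ℕ → ℕ) → (ℕ → ℕ), Measurable f → Measurable g →
        (∀ x : ℕ → ℕ, { n : ℕ | g x n < φm f x n }.Finite) →
        ∀ x : ℕ → ℕ, f x ≠ φp g x) := by
  -- `φ₋ = id` and `φ₊ g = g + 1`: if `f x = g x + 1`, then `f x n > g x n` for every `n`.
  refine ⟨id, fun g x n => g x n + 1, fun f hf => hf, fun g hg => ?_, fun f g _ _ h x hx => ?_⟩
  · exact measurable_pi_iff.2 fun n => (measurable_pi_iff.1 hg n).add_const 1
  · refine Set.infinite_univ ((h x).subset fun n _ => ?_)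
    simp [hx]
end

section
/- Let S ⊆ List ℕ and t ∈ List ℕ. If t is not S-reachable, then there exists h : List ℕ → ℕ such that every t' ∈ List ℕ with t' ⊒_h t satisfies t' ∉ S. -/
/-!
A sequence with infinitely many reachable one-step extensions is itself reachable, because
countably many ordinal ranks have a common strict upper bound (`isReachable_of_infinite`). Hence a
non-reachable `u` has only finitely many `n` with `u ++ [n]` reachable, and `h u` may be taken
strictly above all of them. With this `h`, non-reachability passes along every step to the right
of `h`, so no such extension of `t` is reachable; members of `S` are reachable at rank `0`.
-/

open Classical in
/-- `t` is `α`-`S`-reachable: for `α = 0` this means `t ∈ S`; for `α > 0` it means `t` is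
`β`-`S`-reachable for some `β < α`, or infinitely many `n` are such that `t ++ [n]` is
`β`-`S`-reachable for some `β < α`. -/
def ReachableAt (S : Set (List ℕ)) (α : Ordinal.{0}) (t : List ℕ) : Prop :=
  if α = 0 then t ∈ S
  else (∃ β : Ordinal.{0}, ∃ _ : β < α, ReachableAt S β t) ∨
    { n : ℕ | ∃ β : Ordinal.{0}, ∃ _ : β < α, ReachableAt S β (t ++ [n]) }.Infinite
termination_by α

/-- `t` is `S`-reachable iff it is `α`-`S`-reachable for some ordinal `α`. -/
def IsReachable (S : Set (List ℕ)) (t : List ℕ) : Prop :=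
  ∃ α : Ordinal.{0}, ReachableAt S α t

/-- `t₂ ⊒_h t₁`: `t₂` is an end-extension of `t₁` to the right of `h`, i.e. `t₂(n) ≥ h(t₂ ↾ n)`
for every `n` with `|t₁| ≤ n < |t₂|`. -/
def ExtRight (h : List ℕ → ℕ) (t₁ t₂ : List ℕ) : Prop :=
  t₁ <+: t₂ ∧ ∀ (n : ℕ) (hn : n < t₂.length), t₁.length ≤ n → h (t₂.take n) ≤ t₂.get ⟨n, hn⟩

theorem isReachable_of_mem {S : Set (List ℕ)} {u : List ℕ} (hu : u ∈ S) : IsReachable S u :=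
  ⟨0, by rw [ReachableAt]; simpa using hu⟩

theorem isReachable_of_infinite {S : Set (List ℕ)} {u : List ℕ}
    (hu : {n : ℕ | IsReachable S (u ++ [n])}.Infinite) : IsReachable S u := by
  classical
  let rank : ℕ → Ordinal.{0} := fun n =>
    if hn : IsReachable S (u ++ [n]) then hn.choose else 0
  refine ⟨Order.succ (⨆ n, rank n), ?_⟩
  rw [ReachableAt, if_neg (pos_of_gt (Order.lt_succ (⨆ n, rank n))).ne']
  refine Or.inr (hu.mono fun n hn => ⟨rank n, ?_, ?_⟩)
  · exact Order.lt_succ_of_le (Ordinal.le_iSup rank n)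
  · have hr : rank n = Exists.choose hn := dif_pos hn
    rw [hr]
    exact Exists.choose_spec hn

theorem exists_bound_of_not_isReachable (S : Set (List ℕ)) (u : List ℕ) :
    ∃ b : ℕ, ¬ IsReachable S u → ∀ n, b ≤ n → ¬ IsReachable S (u ++ [n]) := by
  by_cases hu : IsReachable S u
  · exact ⟨0, fun h => absurd hu h⟩
  · have hfin : {n : ℕ | IsReachable S (u ++ [n])}.Finite :=
      Set.not_infinite.mp fun hinf => hu (isReachable_of_infinite hinf)
    obtain ⟨b, hb⟩ := hfin.bddAbove
    exact ⟨b + 1, fun _ n hn hr => absurd (hb hr) (by omega)⟩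

/-- If `t` is not `S`-reachable, then there is an `h : List ℕ → ℕ` such that no extension of `t`
to the right of `h` lies in `S`. -/
theorem stmt8 (S : Set (List ℕ)) (t : List ℕ) (h : ¬ IsReachable S t) :
    ∃ h : List ℕ → ℕ, ∀ t' : List ℕ, ExtRight h t t' → t' ∉ S := by
  choose b hb using exists_bound_of_not_isReachable S
  -- The induction needs the stronger claim that the extensions are not even reachable.
  have key : ∀ s : List ℕ, ExtRight b t (t ++ s) → ¬ IsReachable S (t ++ s) := by
    intro s
    induction s using List.reverseRecOn with
    | nil => intro _; simpa using h
    | append_singleton s n ih =>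
      rintro ⟨-, hs⟩
      rw [← List.append_assoc] at hs ⊢
      refine hb _ (ih ⟨List.prefix_append _ _, fun m hm htm => ?_⟩) n ?_
      · have h1 := hs m (by simp at hm ⊢; omega) htm
        rw [List.take_append_of_le_length hm.le] at h1
        simpa only [List.get_eq_getElem, List.getElem_append_left hm] using h1
      · have h1 := hs (t ++ s).length (by simp) (by simp)
        rw [List.take_left] at h1
        simpa only [List.get_eq_getElem, List.getElem_concat_length] using h1
  refine ⟨b, fun t' ht' hmem => ?_⟩
  obtain ⟨s, rfl⟩ := ht'.1
  exact key s ht' (isReachable_of_mem hmem)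
end

section
/- Let S ⊆ List ℕ, t ∈ List ℕ, and A ⊆ ℕ. Suppose t is S-reachable, and suppose that for every t' ∈ List ℕ and every ordinal α, if the set B = { n ∈ ℕ : the sequence t' followed by n is β-S-reachable for some β < α } is infinite, then B contains infinitely many elements not in A. Then for every h : List ℕ → ℕ there exists t' ∈ S with t' ⊒^A_h t. -/
/-- `t₂ ⊒^A t₁`: `t₂` is an end-extension of `t₁` all of whose new entries avoid `A`, i.e.
`t₂(n) ∉ A` for every `n` with `|t₁| ≤ n < |t₂|`. -/
def ExtAvoid (A : Set ℕ) (t₁ t₂ : List ℕ) : Prop :=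
  t₁ <+: t₂ ∧ ∀ (n : ℕ) (hn : n < t₂.length), t₁.length ≤ n → t₂.get ⟨n, hn⟩ ∉ A

/-- A prefix of the form `t ++ [n]` determines the entry at position `|t|`. -/
lemma get_of_concat_prefix {t t' : List ℕ} {n : ℕ} (hp : t ++ [n] <+: t')
    (hk : t.length < t'.length) : t'.get ⟨t.length, hk⟩ = n := by
  obtain ⟨u, rfl⟩ := hp
  simp

lemma ExtRight.of_concat {h : List ℕ → ℕ} {t t' : List ℕ} {n : ℕ} (hn : h t ≤ n)
    (H : ExtRight h (t ++ [n]) t') : ExtRight h t t' := by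
  obtain ⟨hp, H⟩ := H
  have hpt : t <+: t' := (List.prefix_append t [n]).trans hp
  refine ⟨hpt, fun k hk htk => ?_⟩
  rcases htk.eq_or_lt with rfl | hlt
  · rw [get_of_concat_prefix hp hk, ← List.prefix_iff_eq_take.mp hpt]
    exact hn
  · exact H k hk (by simpa using hlt)

lemma ExtAvoid.of_concat {A : Set ℕ} {t t' : List ℕ} {n : ℕ} (hn : n ∉ A)
    (H : ExtAvoid A (t ++ [n]) t') : ExtAvoid A t t' := by
  obtain ⟨hp, H⟩ := H
  refine ⟨(List.prefix_append t [n]).trans hp, fun k hk htk => ?_⟩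
  rcases htk.eq_or_lt with rfl | hlt
  · rw [get_of_concat_prefix hp hk]
    exact hn
  · exact H k hk (by simpa using hlt)

/-- If `t` is `S`-reachable and, whenever the set
`B = { n | t' ++ [n] is β-S-reachable for some β < α }` is infinite, `B` contains infinitely
many elements not in `A`, then for every `h` there is `t' ∈ S` with `t' ⊒^A_h t`. -/
theorem stmt9 (S : Set (List ℕ)) (t : List ℕ) (A : Set ℕ)
    (hreach : IsReachable S t)
    (hA : ∀ (t' : List ℕ) (α : Ordinal.{0}),
      { n : ℕ | ∃ β < α, ReachableAt S β (t' ++ [n]) }.Infinite →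
      ({ n : ℕ | ∃ β < α, ReachableAt S β (t' ++ [n]) } \ A).Infinite) :
    ∀ h : List ℕ → ℕ, ∃ t' ∈ S, ExtRight h t t' ∧ ExtAvoid A t t' := by
  intro h
  obtain ⟨α, hα⟩ := hreach
  induction α using WellFoundedLT.induction generalizing t with
  | ind α ih =>
    rw [ReachableAt] at hα
    split_ifs at hα with h0
    · -- The trivial extension has no new entries, so both conditions are vacuous.
      exact ⟨t, hα, ⟨List.prefix_rfl, fun n hn hle => absurd hn hle.not_gt⟩,
        ⟨List.prefix_rfl, fun n hn hle => absurd hn hle.not_gt⟩⟩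
    · rcases hα with ⟨β, hβ, hr⟩ | hinf
      · exact ih β hβ t hr
      · simp only [exists_prop] at hinf
        obtain ⟨n, ⟨⟨β, hβ, hr⟩, hnA⟩, hn⟩ := (hA t α hinf).exists_gt (h t)
        obtain ⟨t', hS, hR, hAv⟩ := ih β hβ (t ++ [n]) hr
        exact ⟨t', hS, hR.of_concat hn.le, hAv.of_concat hnA⟩
end

section
/- Let U ⊆ ℍ be open and dense, let S := { t ∈ List ℕ : (t, h) ∈ U for some h }, and let A ⊆ ℕ be such that for every t' ∈ List ℕ and every ordinal α, if the set B = { n ∈ ℕ : the sequence t' followed by n is β-S-reachable for some β < α } is infinite, then B contains infinitely many elements not in A. Then for every p ∈ ℍ there exists p' ∈ U with p' ≤^A p. -/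
/-- `t₂ ⊒^A_h t₁`: `t₂ ⊒_h t₁` and moreover every new entry of `t₂` avoids `A`, i.e.
`t₂(n) ∉ A` for every `n` with `|t₁| ≤ n < |t₂|`. -/
def ExtRightAvoid (A : Set ℕ) (h : List ℕ → ℕ) (t₁ t₂ : List ℕ) : Prop :=
  ExtRight h t₁ t₂ ∧ ∀ (n : ℕ) (hn : n < t₂.length), t₁.length ≤ n → t₂.get ⟨n, hn⟩ ∉ A

/-- A condition of the Hechler-type poset `ℍ`: a pair `(t, h)` with `t ∈ List ℕ` a stem and
`h : List ℕ → ℕ` a side condition. -/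
abbrev Hcond : Type := List ℕ × (List ℕ → ℕ)

/-- The order on `ℍ`: `(t₂, h₂) ≤ (t₁, h₁)` iff `t₂ ⊒_{h₁} t₁` and `h₂ ≥ h₁` pointwise. -/
def Hle (p q : Hcond) : Prop :=
  ExtRight q.2 q.1 p.1 ∧ ∀ s : List ℕ, q.2 s ≤ p.2 s

/-- `(t₂, h₂) ≤^A (t₁, h₁)` iff `t₂ ⊒^A_{h₁} t₁` and `h₂ ≥ h₁` pointwise. -/
def HleAvoid (A : Set ℕ) (p q : Hcond) : Prop :=
  ExtRightAvoid A q.2 q.1 p.1 ∧ ∀ s : List ℕ, q.2 s ≤ p.2 s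

theorem reachableAt_iff (S : Set (List ℕ)) (α : Ordinal.{0}) (t : List ℕ) :
    ReachableAt S α t ↔ if α = 0 then t ∈ S
      else (∃ β < α, ReachableAt S β t) ∨
        { n : ℕ | ∃ β < α, ReachableAt S β (t ++ [n]) }.Infinite := by
  rw [ReachableAt]
  simp only [exists_prop]

theorem reachableAt_zero {S : Set (List ℕ)} {t : List ℕ} (ht : t ∈ S) : ReachableAt S 0 t := by
  rw [reachableAt_iff]
  simpa using ht

theorem ExtRight.induction {h : List ℕ → ℕ} {t s : List ℕ} (hts : ExtRight h t s)
    {P : List ℕ → Prop} (h0 : P t) (hstep : ∀ u n, P u → h u ≤ n → P (u ++ [n])) : P s := by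
  obtain ⟨hpre, hr⟩ := hts
  have key : ∀ k, t.length ≤ k → k ≤ s.length → P (s.take k) := by
    intro k hk
    induction k, hk using Nat.le_induction with
    | base =>
      intro _
      rwa [← List.prefix_iff_eq_take.1 hpre]
    | succ k hk ih =>
      intro hks
      have hlt : k < s.length := hks
      rw [← List.take_concat_get' s k hlt]
      exact hstep _ _ (ih hlt.le) (hr k hlt hk)
  simpa using key s.length hpre.length_le le_rfl

theorem extRightAvoid_refl (A : Set ℕ) (h : List ℕ → ℕ) (t : List ℕ) : ExtRightAvoid A h t t :=
  ⟨⟨List.prefix_rfl, fun _ hn hl => absurd hn (not_lt.2 hl)⟩,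
    fun _ hn hl => absurd hn (not_lt.2 hl)⟩

theorem ExtRightAvoid.of_append {A : Set ℕ} {h : List ℕ → ℕ} {t s : List ℕ} {m : ℕ}
    (hs : ExtRightAvoid A h (t ++ [m]) s) (hm : h t ≤ m) (hmA : m ∉ A) :
    ExtRightAvoid A h t s := by
  obtain ⟨⟨⟨r, rfl⟩, h1⟩, h2⟩ := hs
  refine ⟨⟨⟨m :: r, by simp⟩, fun n hn hl => ?_⟩, fun n hn hl => ?_⟩
  · rcases hl.eq_or_lt with rfl | hlt
    · simpa using hm
    · exact h1 n hn (by simpa using hlt)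
  · rcases hl.eq_or_lt with rfl | hlt
    · simpa using hmA
    · exact h2 n hn (by simpa using hlt)

/-- A sequence with infinitely many reachable one-step extensions is reachable, as countably many
ordinals have a common strict upper bound. -/
theorem exists_reachableAt_of_infinite {S : Set (List ℕ)} {t : List ℕ}
    (ht : {n : ℕ | ∃ α, ReachableAt S α (t ++ [n])}.Infinite) : ∃ α, ReachableAt S α t := by
  classical
  let b : ℕ → Ordinal.{0} := fun n =>
    if hn : ∃ α, ReachableAt S α (t ++ [n]) then hn.choose else 0
  refine ⟨Order.succ (⨆ n, b n), ?_⟩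
  have hne : Order.succ (⨆ n, b n) ≠ 0 :=
    (zero_le.trans_lt (Order.lt_succ (⨆ n, b n))).ne'
  rw [reachableAt_iff, if_neg hne]
  refine Or.inr (ht.mono fun n hn => ⟨b n, Order.lt_succ_of_le (Ordinal.le_iSup b n), ?_⟩)
  have hn' : ∃ α, ReachableAt S α (t ++ [n]) := hn
  simp only [b, dif_pos hn']
  exact hn'.choose_spec

/-- If `S` meets the extensions of `t` to the right of every `h`, then `t` is `S`-reachable. -/
theorem exists_reachableAt {S : Set (List ℕ)} {t : List ℕ}
    (hd : ∀ h : List ℕ → ℕ, ∃ s ∈ S, ExtRight h t s) : ∃ α, ReachableAt S α t := by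
  by_contra hcon
  have hb : ∀ u : List ℕ, ∃ k : ℕ, (¬ ∃ α, ReachableAt S α u) →
      ∀ n, k ≤ n → ¬ ∃ α, ReachableAt S α (u ++ [n]) := by
    intro u
    by_cases hu : ∃ α, ReachableAt S α u
    · exact ⟨0, fun h => absurd hu h⟩
    · have hfin : {n : ℕ | ∃ α, ReachableAt S α (u ++ [n])}.Finite := by
        by_contra hinf
        exact hu (exists_reachableAt_of_infinite hinf)
      obtain ⟨k, hk⟩ := hfin.bddAbove
      exact ⟨k + 1, fun _ n hn hr => by
        have := hk hr
        omega⟩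
  choose h hh using hb
  obtain ⟨s, hsS, hs⟩ := hd h
  exact hs.induction (P := fun u => ¬ ∃ α, ReachableAt S α u) hcon
    (fun u n hu hn => hh u hu n hn) ⟨0, reachableAt_zero hsS⟩

theorem exists_extRightAvoid {S : Set (List ℕ)} {A : Set ℕ}
    (hA : ∀ (t' : List ℕ) (α : Ordinal.{0}),
      { n : ℕ | ∃ β < α, ReachableAt S β (t' ++ [n]) }.Infinite →
      ({ n : ℕ | ∃ β < α, ReachableAt S β (t' ++ [n]) } \ A).Infinite)
    (h : List ℕ → ℕ) (α : Ordinal.{0}) :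
    ∀ t, ReachableAt S α t → ∃ s ∈ S, ExtRightAvoid A h t s := by
  induction α using WellFoundedLT.induction with
  | ind α ih =>
    intro t ht
    rw [reachableAt_iff] at ht
    split_ifs at ht with h0
    · exact ⟨t, ht, extRightAvoid_refl A h t⟩
    · rcases ht with ⟨β, hβ, ht⟩ | hinf
      · exact ih β hβ t ht
      · obtain ⟨m, ⟨⟨β, hβ, hm⟩, hmA⟩, hlt⟩ := (hA t α hinf).exists_gt (h t)
        obtain ⟨s, hsS, hs⟩ := ih β hβ _ hm
        exact ⟨s, hsS, hs.of_append hlt.le hmA⟩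

/-- If `U ⊆ ℍ` is open and dense, `S` is the set of stems of conditions in `U`, and `A ⊆ ℕ` is
such that whenever `B = { n | t' ++ [n] is β-S-reachable for some β < α }` is infinite it
contains infinitely many elements not in `A`, then every condition `p ∈ ℍ` has a
`≤^A`-extension in `U`. -/
theorem stmt11 (U : Set Hcond)
    (hopen : ∀ p ∈ U, ∀ p' : Hcond, Hle p' p → p' ∈ U)
    (hdense : ∀ p : Hcond, ∃ p' ∈ U, Hle p' p)
    (A : Set ℕ)
    (hA : ∀ (t' : List ℕ) (α : Ordinal.{0}),
      { n : ℕ | ∃ β < α, ReachableAt { s : List ℕ | ∃ h : List ℕ → ℕ, (s, h) ∈ U } β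
          (t' ++ [n]) }.Infinite →
      ({ n : ℕ | ∃ β < α, ReachableAt { s : List ℕ | ∃ h : List ℕ → ℕ, (s, h) ∈ U } β
          (t' ++ [n]) } \ A).Infinite) :
    ∀ p : Hcond, ∃ p' ∈ U, HleAvoid A p' p := by
  rintro ⟨t, h⟩
  obtain ⟨α, hα⟩ := exists_reachableAt (S := {s | ∃ h : List ℕ → ℕ, (s, h) ∈ U}) (t := t)
    fun g => by
      obtain ⟨⟨s, g'⟩, hU, hle⟩ := hdense (t, g)
      exact ⟨s, ⟨g', hU⟩, hle.1⟩
  obtain ⟨s, ⟨g, hg⟩, hs⟩ := exists_extRightAvoid hA h α t hα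
  exact ⟨(s, fun u => max (g u) (h u)),
    hopen _ hg _ ⟨(extRightAvoid_refl ∅ g s).1, fun u => le_max_left _ _⟩,
    hs, fun u => le_max_right _ _⟩
end

section
/- Let A ⊆ ℕ and η : ℕ → ℕ. Define F : 𝒩 → 𝒩 by: F(x)(k) = η(x(i_k)) if the set { i : x(i) ∈ A } has at least k+1 elements, where i_k is its (k+1)-st element in increasing order, and F(x)(k) = 0 otherwise. Then F is Baire class one: there is a sequence of continuous functions g_m : 𝒩 → 𝒩 such that for every x ∈ 𝒩, g_m(x) converges to F(x) in 𝒩 as m → ∞. -/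
/-!
Process only the first `m` entries of `x`: let `g m x k` be the sum over `i < m` of the terms
equal to `η (x i)` if `x i ∈ A` and exactly `k` indices `j < i` have `x j ∈ A`, and to `0`
otherwise. Each term depends on finitely many coordinates of `x`, so `g m` is continuous. At most
one index `i` contributes, namely the `(k+1)`-st index of an entry in `A`, so `g m x k` equals
`encodeFn A η x k` as soon as `m` exceeds that index, and for every `m` if there is no such index.
-/


open Classical in
/-- The (totalized) encoding function determined by `A ⊆ ℕ` and `η : ℕ → ℕ`:
`F x k = η (x i_k)` where `i_k` is the `(k+1)`-st index `i` (in increasing order) with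
`x i ∈ A`, provided `{ i | x i ∈ A }` has at least `k + 1` elements, and `F x k = 0`
otherwise. -/
noncomputable def encodeFn (A : Set ℕ) (η : ℕ → ℕ) (x : ℕ → ℕ) (k : ℕ) : ℕ :=
  if { i : ℕ | x i ∈ A }.Infinite ∨ k < { i : ℕ | x i ∈ A }.ncard
  then η (x (Nat.nth (fun i => x i ∈ A) k))
  else 0

open Classical in
/-- The contribution of the index `i` to the `k`-th value: `η (x i)` if `i` is the `(k+1)`-st index
of an entry of `x` in `A`, and `0` otherwise. -/
noncomputable def encodeTerm (A : Set ℕ) (η : ℕ → ℕ) (x : ℕ → ℕ) (k i : ℕ) : ℕ :=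
  if x i ∈ A ∧ Nat.count (fun j => x j ∈ A) i = k then η (x i) else 0

open Classical in
lemma continuous_count_mem (A : Set ℕ) (i : ℕ) :
    Continuous fun x : ℕ → ℕ => Nat.count (fun j => x j ∈ A) i := by
  simp only [Nat.count_eq_card_filter_range, Finset.card_filter]
  exact continuous_finsetSum _ fun j _ =>
    (continuous_of_discreteTopology (f := fun n : ℕ => if n ∈ A then 1 else 0)).comp
      (continuous_apply j)

open Classical in
lemma continuous_encodeTerm (A : Set ℕ) (η : ℕ → ℕ) (k i : ℕ) :
    Continuous fun x : ℕ → ℕ => encodeTerm A η x k i :=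
  (continuous_of_discreteTopology
    (f := fun p : ℕ × ℕ => if p.1 ∈ A ∧ p.2 = k then η p.1 else 0)).comp
      ((continuous_apply i).prodMk (continuous_count_mem A i))

open Classical in
lemma eventually_sum_encodeTerm (A : Set ℕ) (η : ℕ → ℕ) (x : ℕ → ℕ) (k : ℕ) :
    ∀ᶠ m in Filter.atTop, ∑ i ∈ Finset.range m, encodeTerm A η x k i = encodeFn A η x k := by
  by_cases h : { i : ℕ | x i ∈ A }.Infinite ∨ k < { i : ℕ | x i ∈ A }.ncard
  · have hk : ∀ hf : { i : ℕ | x i ∈ A }.Finite, k < hf.toFinset.card := by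
      intro hf
      rcases h with h | h
      · exact absurd hf h
      · rwa [Set.ncard_eq_toFinset_card _ hf] at h
    filter_upwards [Filter.eventually_gt_atTop (Nat.nth (fun i => x i ∈ A) k)] with m hm
    rw [encodeFn, if_pos h, Finset.sum_eq_single (Nat.nth (fun i => x i ∈ A) k)]
    · exact if_pos ⟨Nat.nth_mem k hk, Nat.count_nth hk⟩
    · intro i _ hi
      refine if_neg fun hc => hi ?_
      rw [← hc.2]
      exact (Nat.nth_count (p := fun j => x j ∈ A) hc.1).symm
    · exact fun hn => absurd (Finset.mem_range.2 hm) hn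
  · refine Filter.Eventually.of_forall fun m => ?_
    rw [encodeFn, if_neg h]
    refine Finset.sum_eq_zero fun i _ => if_neg fun hc => h ?_
    by_cases hf : { i : ℕ | x i ∈ A }.Finite
    · right
      rw [Set.ncard_eq_toFinset_card _ hf, ← hc.2]
      exact Nat.count_lt_card (p := fun j => x j ∈ A) hf hc.1
    · exact Or.inl hf

/-- The encoding function `F = encodeFn A η : 𝒩 → 𝒩` is Baire class one: it is the pointwise
limit (in `𝒩 = ℕ → ℕ` with the product topology, `ℕ` discrete) of a sequence of continuous
functions. -/
theorem stmt12 (A : Set ℕ) (η : ℕ → ℕ) :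
    ∃ g : ℕ → (ℕ → ℕ) → (ℕ → ℕ),
      (∀ m : ℕ, Continuous (g m)) ∧
      ∀ x : ℕ → ℕ, Filter.Tendsto (fun m => g m x) Filter.atTop (nhds (encodeFn A η x)) := by
  refine ⟨fun m x k => ∑ i ∈ Finset.range m, encodeTerm A η x k i, fun m => ?_, fun x => ?_⟩
  · exact continuous_pi fun k => continuous_finsetSum _ fun i _ => continuous_encodeTerm A η k i
  · exact tendsto_pi_nhds.2 fun k =>
      tendsto_nhds_of_eventually_eq (eventually_sum_encodeTerm A η x k)
end

section
/- Let ℬ be the set of Borel functions from 𝒩 to 𝒩. The least cardinality of a set S ⊆ ℬ such that for every f ∈ ℬ there exists g ∈ S with f(x) ≠ g(x) for all x ∈ 𝒩, equals 𝔠 = 2^{ℵ₀}. (In the paper's notation, ||𝒟_{Δ¹₁}|| = 2^ω.) -/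
/-!
The Borel functions number `𝔠`, and every `f` is disjoint from `x ↦ f x + 1`, so the norm is at
most `𝔠`. For the lower bound, let `S` be a set of fewer than `𝔠` Borel functions; a Borel `f`
meeting every member of `S` somewhere is needed.

If `S = {g_n}` is countable, `f x = g_{x 0} x` works. Otherwise `ℵ₁ ≤ |S| < 𝔠`, and it suffices to
have Borel functions `f_c`, for `c` in Cantor space, such that each Borel `g` is disjoint from at
most `ℵ₁` of them: then at most `|S| < 𝔠` of the `c` are ruled out by members of `S`.

Put `f_c x = V(x, c)`, where `x` is read as a code for a continuous map `V(x, ·)` of Cantor space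
to itself (a sequence of clopen sets), followed by a Borel isomorphism onto `𝒩`. Every uncountable
Borel set `P` contains a copy of Cantor space, so some `V(x, ·)` maps `P` onto everything
(`exists_code`); in particular `f_c x = g x` for some `c ∈ P`. Hence the coanalytic set of `c` with
`f_c` disjoint from `g` has no uncountable Borel subset. As a coanalytic set is a union of `ℵ₁`
Borel sets (`exists_borel_decomposition`), its cardinality is at most `ℵ₁`
(`mk_disjoint_challenge_le`).
-/

open Set Cardinal Ordinal MeasureTheory TopologicalSpace

/-! ### Coanalytic sets as unions of `ℵ₁` Borel sets -/

/-- The `α`-th Borel approximation from outside to the Suslin operation applied to the scheme `C`.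
Finite sequences are stored as lists in reversed order, so that `k :: s` extends `s` by `k`. -/
def sieve {X : Type} (C : List ℕ → Set X) (α : Ordinal.{0}) (s : List ℕ) : Set X :=
  C s ∩ ⋂ β : Iio α, ⋃ k : ℕ, sieve C β.1 (k :: s)
termination_by α
decreasing_by exact β.2

theorem mem_sieve_iff {X : Type} {C : List ℕ → Set X} {α : Ordinal.{0}} {s : List ℕ} {c : X} :
    c ∈ sieve C α s ↔ c ∈ C s ∧ ∀ β < α, ∃ k : ℕ, c ∈ sieve C β (k :: s) := by
  rw [sieve]
  simp

theorem sieve_anti {X : Type} (C : List ℕ → Set X) {α β : Ordinal.{0}} (h : α ≤ β)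
    (s : List ℕ) : sieve C β s ⊆ sieve C α s := by
  intro c hc
  rw [mem_sieve_iff] at hc ⊢
  exact ⟨hc.1, fun γ hγ => hc.2 γ (hγ.trans_le h)⟩

theorem measurableSet_sieve {X : Type} [MeasurableSpace X] {C : List ℕ → Set X}
    (hC : ∀ s, MeasurableSet (C s)) (α : Ordinal.{0}) :
    α < ω_ 1 → ∀ s, MeasurableSet (sieve C α s) := by
  induction α using WellFoundedLT.induction with
  | ind α ih =>
    intro hα s
    rw [sieve]
    have : Countable (Iio α) := by
      rw [← Cardinal.mk_le_aleph0_iff, Cardinal.mk_Iio_ordinal, Cardinal.lift_le_aleph0]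
      have h1 : α.card < ℵ₁ := by
        rw [← Cardinal.lt_ord, Cardinal.ord_aleph]; exact hα
      rw [← Cardinal.succ_aleph0, Order.lt_succ_iff] at h1
      exact h1
    exact (hC s).inter (MeasurableSet.iInter fun β =>
      MeasurableSet.iUnion fun k => ih β.1 β.2 (β.2.trans hα) _)

/-- A point surviving all countable stages of the sieve lies on an infinite branch: the sequences
at which it survives all countable stages form a tree without leaves, since countably many
countable ordinals are bounded below `ω₁`. -/
theorem exists_branch {X : Type} {C : List ℕ → Set X} {c : X}
    (hc : ∀ α < ω_ 1, c ∈ sieve C α []) : ∃ σ : ℕ → ℕ, ∀ n, c ∈ C (PiNat.res σ n) := by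
  let T := {s : List ℕ // ∀ α < ω_ 1, c ∈ sieve C α s}
  have hT : ∀ s : T, ∃ k : ℕ, ∀ α < ω_ 1, c ∈ sieve C α (k :: s.1) := by
    intro s
    by_contra! h
    choose a ha hca using h
    have hsup : (⨆ k, a k) < ω_ 1 := Ordinal.iSup_lt_omega_one ha
    have hsucc : Order.succ (⨆ k, a k) < ω_ 1 :=
      (Cardinal.isSuccLimit_omega 1).succ_lt hsup
    obtain ⟨k, hk⟩ := (mem_sieve_iff.1 (s.2 _ hsucc)).2 _ (Order.lt_succ _)
    exact hca k (sieve_anti C (Ordinal.le_iSup a k) _ hk)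
  choose k hk using hT
  let t : ℕ → T := fun n => Nat.rec ⟨[], hc⟩ (fun _ s => ⟨k s :: s.1, hk s⟩) n
  refine ⟨fun n => k (t n), fun n => ?_⟩
  have hres : PiNat.res (fun n => k (t n)) n = (t n).1 := by
    induction n with
    | zero => rfl
    | succ n ih => rw [PiNat.res_succ, ih]
  rw [hres]
  exact (mem_sieve_iff.1 ((t n).2 0 (Ordinal.omega_pos 1))).1

/-- Sierpiński: the complement of an analytic set is a union of `ℵ₁` Borel sets. -/
theorem exists_borel_decomposition {X : Type} [TopologicalSpace X] [T3Space X]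
    [MeasurableSpace X] [BorelSpace X] {A : Set X} (hA : AnalyticSet A) :
    ∃ D : Ordinal.{0} → Set X, (∀ α < ω_ 1, MeasurableSet (D α) ∧ D α ⊆ Aᶜ) ∧
      Aᶜ ⊆ ⋃ α ∈ Iio (ω_ 1), D α := by
  rw [AnalyticSet] at hA
  rcases hA with rfl | ⟨f, hf, rfl⟩
  · refine ⟨fun _ => univ, by simp, fun x _ => ?_⟩
    simp only [mem_iUnion]
    exact ⟨0, Ordinal.omega_pos 1, trivial⟩
  let C : List ℕ → Set X := fun s => closure (f '' {σ | PiNat.res σ s.length = s})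
  have hC : ∀ s, MeasurableSet (C s) := fun s => isClosed_closure.measurableSet
  have hsub : ∀ (τ : ℕ → ℕ) (α : Ordinal.{0}) (n : ℕ), f τ ∈ sieve C α (PiNat.res τ n) := by
    intro τ α
    induction α using WellFoundedLT.induction with
    | ind α ih =>
      intro n
      rw [mem_sieve_iff]
      refine ⟨subset_closure ⟨τ, by simp, rfl⟩, fun β hβ => ⟨τ n, ?_⟩⟩
      simpa using ih β hβ (n + 1)
  refine ⟨fun α => (sieve C α [])ᶜ, fun α hα =>
    ⟨(measurableSet_sieve hC α hα _).compl, compl_subset_compl.2 ?_⟩, fun c hc => ?_⟩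
  · rintro _ ⟨τ, rfl⟩
    exact hsub τ α 0
  · by_contra h
    simp only [mem_iUnion, not_exists, mem_compl_iff, not_not, mem_Iio] at h
    obtain ⟨σ, hσ⟩ := exists_branch h
    refine hc ⟨σ, ?_⟩
    by_contra hne
    -- A closed neighbourhood of `f σ` missing `c` contains the image of a cylinder around `σ`.
    obtain ⟨V, hV, hVc, hVs⟩ := exists_mem_nhds_isClosed_subset
      (isOpen_compl_singleton.mem_nhds (show f σ ∈ ({c} : Set X)ᶜ from hne))
    obtain ⟨_, ⟨y, n, rfl⟩, hy, hyV⟩ :=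
      (PiNat.isTopologicalBasis_cylinders (fun _ : ℕ => ℕ)).mem_nhds_iff.1
        (hf.continuousAt.preimage_mem_nhds hV)
    rw [← PiNat.mem_cylinder_iff_eq.1 hy, PiNat.cylinder_eq_res] at hyV
    have h2 : C (PiNat.res σ n) ⊆ V := by
      refine closure_minimal ?_ hVc
      rintro _ ⟨τ, hτ, rfl⟩
      exact hyV (by simpa using hτ)
    exact hVs (h2 (hσ n)) rfl

/-- A weak form of the perfect set dichotomy for coanalytic sets. -/
theorem mk_le_aleph_one_of_coanalytic {X : Type} [TopologicalSpace X] [T3Space X]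
    [MeasurableSpace X] [BorelSpace X] {A : Set X} (hA : AnalyticSet A)
    (h : ∀ P : Set X, MeasurableSet P → P ⊆ Aᶜ → P.Countable) : #(Aᶜ : Set X) ≤ ℵ₁ := by
  obtain ⟨D, hD, hcov⟩ := exists_borel_decomposition hA
  refine (Cardinal.mk_le_mk_of_subset hcov).trans ?_
  refine Cardinal.mk_biUnion_le_of_le_lift ?_ (Cardinal.aleph0_le_aleph 1) _ ?_
  · simp
  · intro α hα
    exact (Cardinal.le_aleph0_iff_set_countable.2 (h _ (hD α hα).1 (hD α hα).2)).trans
      (Cardinal.aleph0_le_aleph 1)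

/-! ### Maps of Cantor space coded by points of Baire space -/

instance : IsCompletelyMetrizableSpace Bool := inferInstance

instance : PolishSpace (ℕ → Bool) :=
  have : IsCompletelyMetrizableSpace (ℕ → Bool) := IsCompletelyMetrizableSpace.pi_countable
  { }

instance : Countable (Clopens (ℕ → Bool)) :=
  Clopens.countable_iff_secondCountable.2 inferInstance

theorem exists_clopen_enum : ∃ e : ℕ → Clopens (ℕ → Bool), Function.Surjective e :=
  exists_surjective_nat _

/-- An enumeration of the clopen subsets of Cantor space. -/
noncomputable def clopenEnum : ℕ → Clopens (ℕ → Bool) := exists_clopen_enum.choose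

theorem clopenEnum_surjective : Function.Surjective clopenEnum := exists_clopen_enum.choose_spec

/-- The map `c ↦ V(x, c)` from Cantor space to itself coded by `x`: the `n`-th bit of `V(x, c)`
tells whether `c` lies in the clopen set with index `x n`. -/
noncomputable def codedMap (p : (ℕ → ℕ) × (ℕ → Bool)) : ℕ → Bool :=
  open Classical in fun n => decide (p.2 ∈ clopenEnum (p.1 n))

theorem measurable_codedMap : Measurable codedMap := by
  refine measurable_pi_lambda _ fun n => measurable_to_bool ?_
  have : (fun p => codedMap p n) ⁻¹' {true} =
      ⋃ m : ℕ, {p : (ℕ → ℕ) × (ℕ → Bool) | p.1 n = m ∧ p.2 ∈ clopenEnum m} := by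
    ext p
    simp [codedMap]
  rw [this]
  refine MeasurableSet.iUnion fun m => MeasurableSet.inter ?_ ?_
  · exact measurableSet_eq_fun ((measurable_pi_apply n).comp measurable_fst) measurable_const
  · exact measurable_snd (clopenEnum m).isClopen.isOpen.measurableSet

/-- Every uncountable Borel set is mapped onto Cantor space by some coded map: inside it there is
a copy of Cantor space, and each coordinate of the inverse homeomorphism extends to a clopen set. -/
theorem exists_code_s14 {P : Set (ℕ → Bool)} (hP : MeasurableSet P) (hunc : ¬ P.Countable) :
    ∃ x : ℕ → ℕ, ∀ b : ℕ → Bool, ∃ c ∈ P, codedMap (x, c) = b := by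
  obtain ⟨φ, hφP, hφ, hinj⟩ : ∃ φ : (ℕ → Bool) → (ℕ → Bool),
      range φ ⊆ P ∧ Continuous φ ∧ Function.Injective φ := by
    obtain ⟨t', hle, hpol, hcl, -⟩ := hP.isClopenable
    obtain ⟨φ, h1, h2, h3⟩ :=
      @IsClosed.exists_nat_bool_injection_of_not_countable _ t' hpol P hcl hunc
    exact ⟨φ, h1, continuous_le_rng hle h2, h3⟩
  have hsep : ∀ n : ℕ, ∃ m : ℕ, ∀ b : ℕ → Bool, φ b ∈ clopenEnum m ↔ b n = true := by
    intro n
    have hcl : ∀ v : Bool, IsClosed (φ '' {b | b n = v}) := fun v =>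
      hφ.isClosedMap _ (isClosed_eq (continuous_apply n) continuous_const)
    obtain ⟨W, hW, hW1, hW2⟩ := exists_clopen_of_closed_subset_open (hcl true)
      (hcl false).isOpen_compl (by
        rintro _ ⟨b, hb, rfl⟩ ⟨b', hb', h⟩
        rw [hinj h] at hb'
        simp_all)
    obtain ⟨m, hm⟩ := clopenEnum_surjective ⟨W, hW⟩
    refine ⟨m, fun b => ?_⟩
    rw [hm]
    refine ⟨fun h => ?_, fun h => hW1 ⟨b, h, rfl⟩⟩
    by_contra hb
    exact hW2 h ⟨b, by simpa using hb, rfl⟩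
  choose x hx using hsep
  refine ⟨x, fun b => ⟨φ b, hφP ⟨b, rfl⟩, ?_⟩⟩
  funext n
  simp [codedMap, hx]

/-! ### The functions `f_c` -/

theorem not_countable_baire : ¬ Countable (ℕ → ℕ) := by
  rw [← Cardinal.mk_le_aleph0_iff]
  rw [not_le]
  simpa using Cardinal.aleph0_lt_continuum

theorem not_countable_cantor : ¬ Countable (ℕ → Bool) := by
  rw [← Cardinal.mk_le_aleph0_iff]
  rw [not_le]
  simpa using Cardinal.aleph0_lt_continuum

/-- A Borel isomorphism between Cantor space and Baire space. -/
noncomputable def cantorEquivBaire : (ℕ → Bool) ≃ᵐ (ℕ → ℕ) :=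
  PolishSpace.measurableEquivOfNotCountable not_countable_cantor not_countable_baire

/-- The Borel functions `f_c : 𝒩 → 𝒩` indexed by Cantor space,
obtained from `codedMap` by letting the code `x` be the argument and `c` the parameter, and
transporting the values to Baire space. -/
noncomputable def challenge (c : ℕ → Bool) (x : ℕ → ℕ) : ℕ → ℕ := cantorEquivBaire (codedMap (x, c))

theorem measurable_challenge_uncurried :
    Measurable fun p : (ℕ → ℕ) × (ℕ → Bool) => challenge p.2 p.1 :=
  cantorEquivBaire.measurable.comp measurable_codedMap

theorem measurable_challenge (c : ℕ → Bool) : Measurable (challenge c) :=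
  measurable_challenge_uncurried.comp (measurable_id.prodMk measurable_const)

/-- A Borel function is disjoint from at most `ℵ₁` of the functions `f_c`. -/
theorem mk_disjoint_challenge_le {g : (ℕ → ℕ) → (ℕ → ℕ)} (hg : Measurable g) :
    #{c : ℕ → Bool | ∀ x, challenge c x ≠ g x} ≤ ℵ₁ := by
  let A : Set (ℕ → Bool) :=
    Prod.snd '' {p : (ℕ → ℕ) × (ℕ → Bool) | challenge p.2 p.1 = g p.1}
  have hA : AnalyticSet A :=
    (measurableSet_eq_fun measurable_challenge_uncurried
      (hg.comp measurable_fst)).analyticSet.image_of_continuous continuous_snd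
  have hAc : {c : ℕ → Bool | ∀ x, challenge c x ≠ g x} = Aᶜ := by
    ext c
    simp [A]
  rw [hAc]
  refine mk_le_aleph_one_of_coanalytic hA fun P hP hPA => ?_
  by_contra hunc
  obtain ⟨x, hx⟩ := exists_code_s14 hP hunc
  obtain ⟨c, hcP, hc⟩ := hx (cantorEquivBaire.symm (g x))
  exact hPA hcP ⟨(x, c), by simp [challenge, hc], rfl⟩

/-! ### The two bounds -/

theorem mk_borel_functions_le :
    #{g : (ℕ → ℕ) → (ℕ → ℕ) | Measurable g} ≤ 𝔠 := by
  have hB : #{s : Set (ℕ → ℕ) | MeasurableSet s} ≤ 𝔠 := by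
    have h := (BorelSpace.measurable_eq (α := ℕ → ℕ)).trans
      (isBasis_countableBasis (ℕ → ℕ)).borel_eq_generateFrom
    rw [h]
    exact MeasurableSpace.cardinal_measurableSet_le_continuum
      ((Cardinal.le_aleph0_iff_set_countable.2 (countable_countableBasis _)).trans
        Cardinal.aleph0_le_continuum)
  -- A function is determined by the preimages of the subbasic sets `{y | y n = m}`.
  let Φ : {g : (ℕ → ℕ) → (ℕ → ℕ) | Measurable g} →
      (ℕ × ℕ → {s : Set (ℕ → ℕ) | MeasurableSet s}) := fun g q =>
    ⟨{x | g.1 x q.1 = q.2},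
      measurableSet_eq_fun ((measurable_pi_apply q.1).comp g.2) measurable_const⟩
  have hΦ : Function.Injective Φ := by
    intro g h hgh
    refine Subtype.ext (funext fun x => funext fun n => ?_)
    have h1 : {y | g.1 y n = h.1 x n} = {y | h.1 y n = h.1 x n} :=
      congrArg Subtype.val (congrFun hgh (n, h.1 x n))
    exact (Set.ext_iff.1 h1 x).2 rfl
  refine (Cardinal.mk_le_of_injective hΦ).trans ?_
  rw [← Cardinal.power_def]
  refine (Cardinal.power_le_power_right hB).trans ?_
  simp

/-- Countably many Borel functions are all met by the Borel function `x ↦ g_{x 0} x`. -/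
theorem exists_meet_of_countable {S : Set ((ℕ → ℕ) → (ℕ → ℕ))} (hS : ∀ g ∈ S, Measurable g)
    (hc : S.Countable) : ∃ f : (ℕ → ℕ) → (ℕ → ℕ), Measurable f ∧ ∀ g ∈ S, ∃ x, f x = g x := by
  rcases S.eq_empty_or_nonempty with rfl | hne
  · exact ⟨id, measurable_id, by simp⟩
  obtain ⟨e, rfl⟩ := hc.exists_eq_range hne
  refine ⟨fun x => e (x 0) x, ?_, ?_⟩
  · have h : Measurable fun p : (ℕ → ℕ) × ℕ => e p.2 p.1 :=
      measurable_from_prod_countable_left fun n => hS _ ⟨n, rfl⟩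
    exact h.comp (measurable_id.prodMk (measurable_pi_apply 0))
  · rintro _ ⟨n, rfl⟩
    exact ⟨fun _ => n, rfl⟩

theorem exists_meet_of_uncountable {S : Set ((ℕ → ℕ) → (ℕ → ℕ))} (hS : ∀ g ∈ S, Measurable g)
    (hunc : ¬ S.Countable) (hlt : #S < 𝔠) :
    ∃ f : (ℕ → ℕ) → (ℕ → ℕ), Measurable f ∧ ∀ g ∈ S, ∃ x, f x = g x := by
  have h1 : ℵ₁ ≤ #S := by
    rw [← Cardinal.succ_aleph0, Order.succ_le_iff, ← not_le, Cardinal.le_aleph0_iff_set_countable]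
    exact hunc
  have hcard : #(⋃ g ∈ S, {c : ℕ → Bool | ∀ x, challenge c x ≠ g x} : Set (ℕ → Bool)) ≤ #S := by
    refine (Cardinal.mk_biUnion_le _ _).trans ?_
    refine (mul_le_mul_right
      (ciSup_le' fun g => (mk_disjoint_challenge_le (hS _ g.2)).trans h1) _).trans ?_
    rw [Cardinal.mul_eq_self ((Cardinal.aleph0_le_aleph 1).trans h1)]
  obtain ⟨c, hc⟩ : ∃ c, c ∉ ⋃ g ∈ S, {c : ℕ → Bool | ∀ x, challenge c x ≠ g x} := by
    by_contra! h
    rw [Set.eq_univ_of_forall h, Cardinal.mk_univ] at hcard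
    refine (hcard.trans_lt hlt).ne ?_
    simp
  refine ⟨challenge c, measurable_challenge c, fun g hg => ?_⟩
  by_contra! h
  exact hc (mem_biUnion hg h)

/-- The norm of the disjointness relation `𝒟_{Δ¹₁}` on Borel functions `𝒩 → 𝒩`: the least
cardinality of a set `S` of Borel functions `𝒩 → 𝒩` such that every Borel function `𝒩 → 𝒩`
is everywhere different from some member of `S` equals `𝔠 = 2 ^ ℵ₀`. -/
theorem stmt14 :
    sInf {κ : Cardinal |
        ∃ S : Set ((ℕ → ℕ) → (ℕ → ℕ)), Cardinal.mk ↥S = κ ∧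
          (∀ g ∈ S, Measurable g) ∧
          ∀ f : (ℕ → ℕ) → (ℕ → ℕ), Measurable f →
            ∃ g ∈ S, ∀ x : ℕ → ℕ, f x ≠ g x} =
      (2 : Cardinal) ^ Cardinal.aleph0 := by
  have hlower : ∀ S : Set ((ℕ → ℕ) → (ℕ → ℕ)), (∀ g ∈ S, Measurable g) →
      (∀ f : (ℕ → ℕ) → (ℕ → ℕ), Measurable f → ∃ g ∈ S, ∀ x, f x ≠ g x) → 𝔠 ≤ #S := by
    intro S hS hdom
    by_contra! hlt
    obtain ⟨f, hf, hmeet⟩ : ∃ f : (ℕ → ℕ) → (ℕ → ℕ), Measurable f ∧ ∀ g ∈ S, ∃ x, f x = g x := by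
      by_cases hc : S.Countable
      · exact exists_meet_of_countable hS hc
      · exact exists_meet_of_uncountable hS hc hlt
    obtain ⟨g, hg, hne⟩ := hdom f hf
    obtain ⟨x, hx⟩ := hmeet g hg
    exact hne x hx
  have hall : ∀ f : (ℕ → ℕ) → (ℕ → ℕ), Measurable f →
      ∃ g ∈ {g : (ℕ → ℕ) → (ℕ → ℕ) | Measurable g}, ∀ x, f x ≠ g x := by
    intro f hf
    refine ⟨fun x n => f x n + 1, ?_, fun x h => ?_⟩
    · exact measurable_pi_lambda _ fun n => ((measurable_pi_apply n).comp hf).add_const 1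
    · have := congrFun h 0
      simp at this
  rw [Cardinal.two_power_aleph0]
  refine le_antisymm ?_ (le_csInf ⟨_, {g | Measurable g}, rfl, fun g hg => hg, hall⟩ ?_)
  · refine le_trans (csInf_le' ?_) mk_borel_functions_le
    exact ⟨_, rfl, fun g hg => hg, hall⟩
  · rintro κ ⟨S, rfl, hS, hdom⟩
    exact hlower S hS hdom
end

section
/- The least cardinality of a family C of continuous functions from 𝒩 to ℕ such that every continuous function f : 𝒩 → ℕ satisfies f(x) ≤ g(x) for all x ∈ 𝒩 for some g ∈ C, equals the dominating number 𝔡. -/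
/-!
Write `𝒩 = ℕ → ℕ`, and let `res x n` be the restriction of `x` to `n` as a node of the tree of
finite sequences (stored in reverse, so that the children of `s` are the lists `n :: s`).

From a family `C` to a dominating family of at most the same size: given `x`, the function
`y ↦ x (y 0)` is continuous, so some `g ∈ C` lies above it, and then `n ↦ g (n, n, …)` lies
above `x`. Hence `{n ↦ g (n, n, …) | g ∈ C}` is dominating.

Conversely let `D` be dominating. Then `D` is uncountable (`aleph_one_le_mk`), so
`ℵ₁ * |D| * ℵ₀ = |D|`, and it suffices to produce one continuous function for each countable
ordinal `α`, each `d ∈ D` and each `k : ℕ`. The nodes on whose cylinder a continuous `f` is not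
constant form a well-founded tree, which has a rank function `ρ` into some `α < ω₁`, and `f x` is
read off by a function `v` at the node where `x` leaves that tree (`exists_rank`). Fix an
injection `e : α → ℕ`. Some `h`, of the form `s ↦ d (code s) + k`, bounds both `e ∘ ρ` and `v`
everywhere. From `α`, `e` and `h` alone one forms the tree of nodes along which there is a
descending sequence of ordinals below `α` whose `e`-values are bounded by `h`. It contains the
tree of `f`, and it is well founded: at each node only finitely many ordinals are allowed, so by
compactness an infinite branch would give an infinite descending sequence of ordinals. The
maximum of `h` over the restrictions of `x` up to the exit from the larger tree is therefore a
continuous function of `x`, and it lies above `f` (`exists_majorant`).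
-/

/-- The dominating number `𝔡`: the least cardinality of a family `D ⊆ ℕ → ℕ` such that every
`x : ℕ → ℕ` is eventually dominated (at all but finitely many coordinates) by a member
of `D`. -/
noncomputable def dominatingNumber : Cardinal :=
  sInf {κ : Cardinal |
    ∃ D : Set (ℕ → ℕ), Cardinal.mk ↥D = κ ∧
      ∀ x : ℕ → ℕ, ∃ d ∈ D, { n : ℕ | d n < x n }.Finite}

open Set Filter Topology Cardinal Ordinal PiNat

/-- A function that is constant on a cylinder around each point is continuous. -/
lemma continuous_of_res {g : (ℕ → ℕ) → ℕ}
    (hg : ∀ x, ∃ n, ∀ y, res y n = res x n → g y = g x) : Continuous g := by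
  refine IsLocallyConstant.continuous ((IsLocallyConstant.iff_exists_open g).2 fun x => ?_)
  obtain ⟨n, hn⟩ := hg x
  refine ⟨cylinder x n, isOpen_cylinder _ x n, self_mem_cylinder x n, fun y hy => hn y ?_⟩
  rw [cylinder_eq_res] at hy
  exact hy

lemma exists_res_of_continuous {f : (ℕ → ℕ) → ℕ} (hf : Continuous f) (x : ℕ → ℕ) :
    ∃ n, ∀ y, res y n = res x n → f y = f x := by
  have ho : IsOpen (f ⁻¹' {f x}) := (isOpen_discrete _).preimage hf
  obtain ⟨s, ⟨z, n, rfl⟩, hx, hs⟩ :=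
    (isTopologicalBasis_cylinders (fun _ : ℕ => ℕ)).exists_subset_of_mem_open
      (show x ∈ f ⁻¹' {f x} from rfl) ho
  refine ⟨n, fun y hy => hs ?_⟩
  rw [cylinder_eq_res] at hx ⊢
  exact hy.trans hx

lemma res_of_le {x y : ℕ → ℕ} {m n : ℕ} (h : res y n = res x n) (hm : m ≤ n) :
    res y m = res x m :=
  res_eq_res.2 fun _ hi => res_eq_res.1 h (hi.trans_le hm)

/-- `DescendsBelow α e h x n` says that some descending sequence of `n` ordinals below `α` has
`e`-values bounded by `h` along `x`, i.e. that `res x n` lies in the tree determined by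
`α`, `e` and `h`. -/
def DescendsBelow (α : Ordinal.{0}) (e : Ordinal.{0} → ℕ) (h : List ℕ → ℕ) (x : ℕ → ℕ)
    (n : ℕ) : Prop :=
  ∃ ρ : ℕ → Ordinal.{0}, (∀ i < n, ρ i < α ∧ e (ρ i) ≤ h (res x i)) ∧
    ∀ i, i + 1 < n → ρ (i + 1) < ρ i

lemma DescendsBelow.mono {α e h x m n} (hn : DescendsBelow α e h x n) (hm : m ≤ n) :
    DescendsBelow α e h x m := by
  obtain ⟨ρ, h1, h2⟩ := hn
  exact ⟨ρ, fun i hi => h1 i (by omega), fun i hi => h2 i (by omega)⟩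

lemma DescendsBelow.congr {α e h x y n} (hn : DescendsBelow α e h x n)
    (hxy : res y n = res x n) : DescendsBelow α e h y n := by
  obtain ⟨ρ, h1, h2⟩ := hn
  refine ⟨ρ, fun i hi => ?_, h2⟩
  rw [res_of_le hxy hi.le]
  exact h1 i hi

/-- The tree given by `DescendsBelow` is well founded. -/
lemma exists_not_descendsBelow {α : Ordinal.{0}} {e : Ordinal.{0} → ℕ}
    (he : InjOn e (Iio α)) (h : List ℕ → ℕ) (x : ℕ → ℕ) : ∃ n, ¬ DescendsBelow α e h x n := by
  by_contra! hall
  choose ρ h1 h2 using hall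
  -- The ultrafilter limit of the finite descending sequences is an infinite one, since each
  -- coordinate takes finitely many values.
  have key : ∀ i, ∃ β, ∀ᶠ n in (hyperfilter ℕ : Filter ℕ), ρ n i = β := by
    intro i
    have hfin : {β | β < α ∧ e β ≤ h (res x i)}.Finite := by
      refine Set.Finite.of_finite_image (f := e) ?_ (he.mono fun β hβ => hβ.1)
      exact (finite_Iic (h (res x i))).subset (by rintro _ ⟨β, hβ, rfl⟩; exact hβ.2)
    have hev : ∀ᶠ n in (hyperfilter ℕ : Filter ℕ),
        ∃ β ∈ {β | β < α ∧ e β ≤ h (res x i)}, ρ n i = β := by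
      have : ∀ᶠ n in atTop, i < n := eventually_gt_atTop i
      filter_upwards [Nat.hyperfilter_le_atTop this] with n hn
      exact ⟨_, h1 n i hn, rfl⟩
    obtain ⟨β, -, hβ⟩ := (Ultrafilter.eventually_exists_mem_iff hfin).1 hev
    exact ⟨β, hβ⟩
  choose β hβ using key
  have hdesc : ∀ i, β (i + 1) < β i := by
    intro i
    have hi : ∀ᶠ n in (hyperfilter ℕ : Filter ℕ), i + 1 < n :=
      Nat.hyperfilter_le_atTop (eventually_gt_atTop (i + 1))
    obtain ⟨n, ha, hb, hc⟩ := ((hβ i).and ((hβ (i + 1)).and hi)).exists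
    rw [← ha, ← hb]
    exact h2 n i hc
  exact (not_strictAnti_of_wellFoundedLT β) (strictAnti_nat_of_succ_lt hdesc)

/-- The continuous function attached to `α`, `e` and `h`: it is at least `h` at every node up to
the exit from the tree given by `DescendsBelow`. -/
lemma exists_majorant {α : Ordinal.{0}} {e : Ordinal.{0} → ℕ} (he : InjOn e (Iio α))
    (h : List ℕ → ℕ) : ∃ g : (ℕ → ℕ) → ℕ, Continuous g ∧
      ∀ x n, DescendsBelow α e h x n → h (res x n) ≤ g x := by
  classical
  have hex := exists_not_descendsBelow he h
  refine ⟨fun x => (Finset.range (Nat.find (hex x))).sup fun n => h (res x n), ?_, ?_⟩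
  · refine continuous_of_res fun x => ⟨Nat.find (hex x), fun y hxy => ?_⟩
    have hfind : Nat.find (hex y) = Nat.find (hex x) := by
      rw [Nat.find_eq_iff]
      refine ⟨fun hd => Nat.find_spec (hex x) (hd.congr hxy.symm), fun n hn hnot => ?_⟩
      exact hnot ((not_not.1 (Nat.find_min (hex x) hn)).congr (res_of_le hxy hn.le))
    simp only [hfind]
    refine Finset.sup_congr rfl fun n hn => ?_
    rw [res_of_le hxy (Finset.mem_range.1 hn).le]
  · intro x n hn
    refine Finset.le_sup (f := fun n => h (res x n)) (Finset.mem_range.2 ?_)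
    by_contra! hle
    exact Nat.find_spec (hex x) (hn.mono hle)

/-- `f` is not constant on the cylinder of sequences extending `s`. -/
def NonconstantAt (f : (ℕ → ℕ) → ℕ) (s : List ℕ) : Prop :=
  ∃ x y, res x s.length = s ∧ res y s.length = s ∧ f x ≠ f y

lemma NonconstantAt.res_of_le {f : (ℕ → ℕ) → ℕ} {z : ℕ → ℕ} {m n : ℕ}
    (h : NonconstantAt f (res z n)) (hm : m ≤ n) : NonconstantAt f (res z m) := by
  obtain ⟨x, y, hx, hy, hne⟩ := h
  rw [res_length] at hx hy
  refine ⟨x, y, ?_, ?_, hne⟩ <;> rw [res_length]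
  exacts [_root_.res_of_le hx hm, _root_.res_of_le hy hm]

lemma exists_not_nonconstantAt {f : (ℕ → ℕ) → ℕ} (hf : Continuous f) (x : ℕ → ℕ) :
    ∃ n, ¬ NonconstantAt f (res x n) := by
  obtain ⟨n, hn⟩ := exists_res_of_continuous hf x
  refine ⟨n, ?_⟩
  rintro ⟨y, z, hy, hz, hne⟩
  rw [res_length] at hy hz
  exact hne ((hn y hy).trans (hn z hz).symm)

/-- The child relation of the tree of nodes where `f` is not constant. -/
def ChildRel (f : (ℕ → ℕ) → ℕ) (t s : List ℕ) : Prop :=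
  (∃ n, t = n :: s) ∧ NonconstantAt f t

lemma acc_nil {f : (ℕ → ℕ) → ℕ} (hf : Continuous f) : Acc (ChildRel f) [] := by
  by_contra hnil
  have hstep : ∀ s : {s : List ℕ // ¬ Acc (ChildRel f) s},
      ∃ n, NonconstantAt f (n :: s.1) ∧ ¬ Acc (ChildRel f) (n :: s.1) := by
    rintro ⟨s, hs⟩
    by_contra! hcon
    refine hs (Acc.intro s ?_)
    rintro _ ⟨⟨n, rfl⟩, hn⟩
    exact hcon n hn
  choose c hc1 hc2 using hstep
  let b : ℕ → {s : List ℕ // ¬ Acc (ChildRel f) s} :=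
    fun k => Nat.rec ⟨[], hnil⟩ (fun _ s => ⟨c s :: s.1, hc2 s⟩) k
  have hb : ∀ k, res (fun i => c (b i)) k = (b k).1 := by
    intro k
    induction k with
    | zero => rfl
    | succ k ih => rw [res_succ, ih]
  obtain ⟨n, hn⟩ := exists_not_nonconstantAt hf (fun i => c (b i))
  refine hn (NonconstantAt.res_of_le (n := n + 1) ?_ n.le_succ)
  rw [hb]
  exact hc1 (b n)

lemma acc_rank_lt_omega_one {r : List ℕ → List ℕ → Prop} {s : List ℕ} (hs : Acc r s) :
    hs.rank < ω₁ := by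
  induction hs with
  | intro s hs ih =>
    rw [Acc.rank_eq]
    apply Ordinal.iSup_lt_omega_one
    rintro ⟨t, ht⟩
    exact (Cardinal.isSuccLimit_omega 1).succ_lt (ih t ht)

/-- A continuous function is coded by a rank function `ρ`, bounded by a countable ordinal, and a
value function `v`: along each `x` the rank descends until a node where `v` gives `f x`. -/
lemma exists_rank {f : (ℕ → ℕ) → ℕ} (hf : Continuous f) :
    ∃ α < ω₁, ∃ (ρ : List ℕ → Ordinal.{0}) (v : List ℕ → ℕ), (∀ s, ρ s < α) ∧
      ∀ x, ∃ n, f x = v (res x n) ∧ ∀ i, i + 1 < n → ρ (res x (i + 1)) < ρ (res x i) := by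
  classical
  let ρ : List ℕ → Ordinal.{0} := fun s => if hs : Acc (ChildRel f) s then hs.rank else 0
  have hρ : ∀ s, ρ s < ω₁ := by
    intro s
    by_cases hs : Acc (ChildRel f) s
    · simp only [ρ, dif_pos hs]
      exact acc_rank_lt_omega_one hs
    · simp only [ρ, dif_neg hs]
      exact Ordinal.omega_pos 1
  refine ⟨⨆ s, Order.succ (ρ s), ?_, ρ, fun s => sInf (f '' {x | res x s.length = s}), ?_, ?_⟩
  · exact Ordinal.iSup_lt_omega_one fun s => (Cardinal.isSuccLimit_omega 1).succ_lt (hρ s)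
  · exact fun s => (Order.lt_succ _).trans_le (Ordinal.le_iSup (fun s => Order.succ (ρ s)) s)
  · intro x
    have hex := exists_not_nonconstantAt hf x
    have hlt : ∀ i < Nat.find hex, NonconstantAt f (res x i) :=
      fun i hi => not_not.1 (Nat.find_min hex hi)
    have hrel : ∀ i, i + 1 < Nat.find hex → ChildRel f (res x (i + 1)) (res x i) :=
      fun i hi => ⟨⟨x i, rfl⟩, hlt _ hi⟩
    have hacc : ∀ i < Nat.find hex, Acc (ChildRel f) (res x i) := by
      intro i
      induction i with
      | zero => exact fun _ => acc_nil hf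
      | succ i ih => exact fun hi => (ih (by omega)).inv (hrel i hi)
    refine ⟨Nat.find hex, ?_, fun i hi => ?_⟩
    · have hmem : x ∈ {y | res y (res x (Nat.find hex)).length = res x (Nat.find hex)} := by
        simp [res_length]
      obtain ⟨z, hz, hzv⟩ := Nat.sInf_mem (Set.Nonempty.image f ⟨x, hmem⟩)
      refine Eq.trans ?_ hzv
      by_contra hne
      exact Nat.find_spec hex ⟨x, z, hmem, hz, hne⟩
    · simp only [ρ, dif_pos (hacc _ hi), dif_pos (hacc i (by omega))]
      exact Acc.rank_lt_of_rel (hacc i (by omega)) (hrel i hi)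

lemma exists_injOn_Iio {α : Ordinal.{0}} (hα : α < ω₁) :
    ∃ e : Ordinal.{0} → ℕ, InjOn e (Iio α) := by
  rw [← Set.countable_iff_exists_injOn, ← Cardinal.le_aleph0_iff_set_countable,
    Cardinal.mk_Iio_ordinal, Cardinal.lift_le_aleph0, ← Order.lt_succ_iff, Cardinal.succ_aleph0]
  exact lt_omega_iff_card_lt.1 hα

/-- A dominating family is uncountable, by diagonalization. -/
lemma aleph_one_le_mk {D : Set (ℕ → ℕ)}
    (hD : ∀ x : ℕ → ℕ, ∃ d ∈ D, {n : ℕ | d n < x n}.Finite) : ℵ₁ ≤ #D := by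
  rw [← Cardinal.succ_aleph0, Order.succ_le_iff]
  by_contra! hle
  have hcount : D.Countable := Cardinal.le_aleph0_iff_set_countable.1 hle
  obtain ⟨d₀, hd₀, -⟩ := hD 0
  obtain ⟨u, rfl⟩ := hcount.exists_eq_range ⟨d₀, hd₀⟩
  obtain ⟨_, ⟨i, rfl⟩, hfin⟩ := hD fun n => ∑ j ∈ Finset.range (n + 1), u j n + 1
  refine (Set.Ici_infinite i) (hfin.subset fun n hn => ?_)
  have hi : i ∈ Finset.range (n + 1) := Finset.mem_range.2 (Nat.lt_succ_of_le hn)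
  have := Finset.single_le_sum (f := fun j => u j n) (fun _ _ => Nat.zero_le _) hi
  exact Nat.lt_succ_of_le this

/-- A dominating family becomes everywhere dominating after adding constants. -/
lemma exists_add_const {D : Set (ℕ → ℕ)}
    (hD : ∀ x : ℕ → ℕ, ∃ d ∈ D, {n : ℕ | d n < x n}.Finite) (x : ℕ → ℕ) :
    ∃ d ∈ D, ∃ k, ∀ n, x n ≤ d n + k := by
  obtain ⟨d, hd, hfin⟩ := hD x
  refine ⟨d, hd, hfin.toFinset.sup x, fun n => ?_⟩
  by_cases hn : d n < x n
  · have := Finset.le_sup (f := x) (hfin.mem_toFinset.2 hn)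
    omega
  · omega

lemma exists_continuous_family {D : Set (ℕ → ℕ)}
    (hD : ∀ x : ℕ → ℕ, ∃ d ∈ D, {n : ℕ | d n < x n}.Finite) :
    ∃ C : Set ((ℕ → ℕ) → ℕ), #C ≤ #D ∧ (∀ g ∈ C, Continuous g) ∧
      ∀ f : (ℕ → ℕ) → ℕ, Continuous f → ∃ g ∈ C, ∀ x : ℕ → ℕ, f x ≤ g x := by
  choose e he using fun α : Iio (ω₁ : Ordinal.{0}) => exists_injOn_Iio α.2
  choose G hG1 hG2 using fun p : Iio (ω₁ : Ordinal.{0}) × D × ℕ =>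
    exists_majorant (he p.1) (fun s => p.2.1.1 (Encodable.encode s) + p.2.2)
  refine ⟨Set.range G, ?_, ?_, ?_⟩
  · have h1 := aleph_one_le_mk hD
    have h0 : ℵ₀ ≤ #D := Cardinal.aleph0_lt_aleph_one.le.trans h1
    have hle := Cardinal.mk_range_le_lift (f := G)
    rw [← Cardinal.lift_le.{1}]
    refine (by simpa using hle : Cardinal.lift.{1} #(Set.range G) ≤ _).trans ?_
    have h1' : (ℵ₁ : Cardinal.{1}) ≤ Cardinal.lift.{1} #D := by simpa using h1
    have h0' : ℵ₀ ≤ Cardinal.lift.{1} #D := by simpa using h0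
    rw [Cardinal.mul_eq_left h0' h0' Cardinal.aleph0_ne_zero]
    exact (Cardinal.mul_eq_right h0' h1' (Cardinal.aleph_pos 1).ne').le
  · rintro _ ⟨p, rfl⟩
    exact hG1 p
  · intro f hf
    obtain ⟨α, hα, ρ, v, hρα, hv⟩ := exists_rank hf
    obtain ⟨d, hd, k, hdk⟩ := exists_add_const hD fun n =>
      ((Encodable.decode n : Option (List ℕ)).elim 0 fun s => max (e ⟨α, hα⟩ (ρ s)) (v s))
    have hbound : ∀ s : List ℕ,
        max (e ⟨α, hα⟩ (ρ s)) (v s) ≤ d (Encodable.encode s) + k := by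
      intro s
      simpa using hdk (Encodable.encode s)
    refine ⟨_, ⟨(⟨α, hα⟩, ⟨d, hd⟩, k), rfl⟩, fun x => ?_⟩
    obtain ⟨n, hn, hdesc⟩ := hv x
    rw [hn]
    refine ((le_max_right _ _).trans (hbound (res x n))).trans (hG2 (⟨α, hα⟩, ⟨d, hd⟩, k) x n ?_)
    exact ⟨fun i => ρ (res x i),
      fun i _ => ⟨hρα _, (le_max_left _ _).trans (hbound (res x i))⟩, hdesc⟩

/-- The least cardinality of a family `C` of continuous functions `𝒩 → ℕ` such that every
continuous function `𝒩 → ℕ` is everywhere dominated by a member of `C` equals the dominating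
number `𝔡`. -/
theorem stmt15 :
    sInf {κ : Cardinal |
        ∃ C : Set ((ℕ → ℕ) → ℕ), Cardinal.mk ↥C = κ ∧
          (∀ g ∈ C, Continuous g) ∧
          ∀ f : (ℕ → ℕ) → ℕ, Continuous f → ∃ g ∈ C, ∀ x : ℕ → ℕ, f x ≤ g x} =
      dominatingNumber := by
  unfold dominatingNumber
  apply le_antisymm
  · refine le_csInf ⟨_, Set.univ, rfl, fun x => ⟨x, mem_univ _, by simp⟩⟩ ?_
    rintro _ ⟨D, rfl, hD⟩
    obtain ⟨C, hcard, hC⟩ := exists_continuous_family hD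
    refine le_trans ?_ hcard
    exact csInf_le' ⟨C, rfl, hC⟩
  · refine le_csInf ⟨_, {f | Continuous f}, rfl, fun _ h => h,
      fun f hf => ⟨f, hf, fun _ => le_rfl⟩⟩ ?_
    rintro _ ⟨C, rfl, -, hC⟩
    refine le_trans ?_ (Cardinal.mk_image_le (f := fun (g : (ℕ → ℕ) → ℕ) n => g fun _ => n))
    refine csInf_le' ⟨_, rfl, fun x => ?_⟩
    obtain ⟨g, hg, hle⟩ := hC (fun y => x (y 0)) (by fun_prop)
    refine ⟨_, ⟨g, hg, rfl⟩, ?_⟩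
    convert Set.finite_empty
    ext n
    simpa using hle fun _ => n
end
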